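/- Conjugate gradient orthogonality: Let R be a commutative real Riesz algebra, A an n×n positive definite symmetric matrix over R, b ∈ Rⁿ, and x₀ ∈ Rⁿ. Define r₀ = p₀ = b - A·x₀, and recursively x_{k} = x_{k-1} + α_{k-1}p_{k-1}, r_k = b - A·x_k, p_k = r_k - (r_kᵀAp_{k-1})(p_{k-1}ᵀAp_{k-1})⁻¹ p_{k-1}, α_k = (r_kᵀp_k)(p_kᵀAp_k)⁻¹, assuming all the quantities p_iᵀAp_i are invertible in R for i ≤ k. Then p_iᵀ r_j = 0 for all 0 ≤ i < j ≤ k. -/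

import Mathlib

open Matrix

/-- `a` is strictly positive: nonnegative, nonzero and invertible. -/
def SPos {R : Type*} [Ring R] [PartialOrder R] (a : R) : Prop :=
  0 ≤ a ∧ a ≠ 0 ∧ IsUnit a

/-- A Riesz algebra: a partially ordered, strictly archimedean, lattice-ordered
commutative ℝ-algebra. -/
class RieszAlgebra (R : Type*) extends CommRing R, Lattice R, Algebra ℝ R where
  add_le_add_left : ∀ a b : R, a ≤ b → ∀ c : R, c + a ≤ c + b
  mul_nonneg : ∀ a b : R, 0 ≤ a → 0 ≤ b → 0 ≤ a * b
  sq_nonneg : ∀ a : R, 0 ≤ a * a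
  smul_nonneg : ∀ (t : ℝ) (a : R), 0 ≤ t → 0 ≤ a → 0 ≤ t • a
  strictly_archimedean : ∀ a b : R, (∀ t : ℝ, SPos (a - t • b)) → b = 0

/-- A real Riesz algebra: every strictly positive element has a (unique) strictly
positive square root. -/
class RealRieszAlgebra (R : Type*) extends RieszAlgebra R where
  sqrt : R → R
  sqrt_spos : ∀ a : R, SPos a → SPos (sqrt a)
  sqrt_sq : ∀ a : R, SPos a → sqrt a * sqrt a = a
  sqrt_unique : ∀ a b : R, SPos a → SPos b → b * b = a → b = sqrt a

/-!
Writing `r (j + 1) = r j - α j • A *ᵥ p j`, one proves by induction on `j` that, for all `i < j`,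
`p i` is orthogonal to `r j` and `A`-conjugate to `p j`. For the conjugacy,
`α i • A *ᵥ p i = r i - r (i + 1)` is orthogonal to `r (j + 1)` when `i < j`, and `α i` has to be
cancelled. Since `p i ⬝ᵥ r i = r i ⬝ᵥ r i`, the equation `t * α i = 0` gives
`(t • r i) ⬝ᵥ (t • r i) = 0`. When `R` is formally real, `t • r i = 0`, whence `t • p i = 0`, and
`t = 0` because `p i ⬝ᵥ A *ᵥ p i` is a unit.

A Riesz algebra is formally real: if `a * a = 0`, then `1 - t • a` is a square and a unit for every
real `t`, and strict archimedeanity gives `a = 0`.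
-/

theorem dotProduct_self_eq_zero_of_isFormallyReal {R ι : Type*} [NonUnitalNonAssocSemiring R]
    [IsFormallyReal R] [Fintype ι] {v : ι → R} (h : v ⬝ᵥ v = 0) : v = 0 := by
  classical
  funext i
  have hsplit : v i * v i + ∑ m ∈ {i}ᶜ, v m * v m = 0 := by
    rw [← h, dotProduct, Fintype.sum_eq_add_sum_compl i]
  have hsq : v i * v i = 0 :=
    IsFormallyReal.eq_zero_of_add_right (.mul_self _) (.sum_mul_self _ _) hsplit
  by_contra hi
  exact IsFormallyReal.not_isSumNonzeroSq_zero (hsq ▸ IsSumNonzeroSq.sq hi)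

namespace RieszAlgebra

variable {R : Type*} [RieszAlgebra R]

instance : IsOrderedAddMonoid R where
  add_le_add_left a b h c := by
    simpa only [add_comm] using RieszAlgebra.add_le_add_left a b h c

theorem nonneg_of_isSumSq {s : R} (h : IsSumSq s) : 0 ≤ s := by
  induction h with
  | zero => exact le_rfl
  | sq_add a _ ih => exact add_nonneg (RieszAlgebra.sq_nonneg a) ih

theorem sPos_one_sub_smul [Nontrivial R] {a : R} (ha : a * a = 0) (t : ℝ) : SPos (1 - t • a) := by
  have hunit : IsUnit (1 - t • a) := by
    refine IsUnit.of_mul_eq_one (1 + t • a) ?_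
    simp only [sub_mul, mul_add, one_mul, mul_one, smul_mul_smul_comm, ha, smul_zero]
    module
  have hsquare : 1 - t • a = (1 - (t / 2) • a) * (1 - (t / 2) • a) := by
    simp only [sub_mul, mul_sub, one_mul, mul_one, smul_mul_smul_comm, ha, smul_zero]
    module
  exact ⟨hsquare ▸ RieszAlgebra.sq_nonneg _, hunit.ne_zero, hunit⟩

theorem eq_zero_of_mul_self_eq_zero {a : R} (ha : a * a = 0) : a = 0 := by
  nontriviality R
  exact RieszAlgebra.strictly_archimedean 1 a (sPos_one_sub_smul ha)

instance : IsFormallyReal R :=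
  .of_eq_zero_of_mul_self_of_eq_zero_of_add eq_zero_of_mul_self_eq_zero fun h₁ h₂ h =>
    ((add_eq_zero_iff_of_nonneg (nonneg_of_isSumSq h₁) (nonneg_of_isSumSq h₂)).mp h).1

end RieszAlgebra

/-- The first `k` steps of the conjugate gradient method for `A *ᵥ x = b`, with iterates `x`,
residuals `r`, search directions `p` and step sizes `α`. The steps are feasible: each energy
`p j ⬝ᵥ A *ᵥ p j` is a unit, so that `Ring.inverse` is its inverse. The sequences are unconstrained
beyond the indices that these steps involve. -/
structure IsConjugateGradient {R ι : Type*} [CommRing R] [Fintype ι] (A : Matrix ι ι R)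
    (b : ι → R) (x r p : ℕ → ι → R) (α : ℕ → R) (k : ℕ) : Prop where
  direction_zero : p 0 = r 0
  residual_eq : ∀ j ≤ k, r j = b - A *ᵥ x j
  isUnit_energy : ∀ j < k, IsUnit (p j ⬝ᵥ A *ᵥ p j)
  iterate_succ : ∀ j < k, x (j + 1) = x j + α j • p j
  direction_succ : ∀ j < k, p (j + 1) = r (j + 1) -
    ((r (j + 1) ⬝ᵥ A *ᵥ p j) * Ring.inverse (p j ⬝ᵥ A *ᵥ p j)) • p j
  stepSize_eq : ∀ j < k, α j = (r j ⬝ᵥ p j) * Ring.inverse (p j ⬝ᵥ A *ᵥ p j)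

namespace IsConjugateGradient

variable {R ι : Type*} [CommRing R] [Fintype ι] {A : Matrix ι ι R} {b : ι → R}
  {x r p : ℕ → ι → R} {α : ℕ → R} {k i j : ℕ}

theorem residual_succ (h : IsConjugateGradient A b x r p α k) (hj : j < k) :
    r (j + 1) = r j - α j • A *ᵥ p j := by
  rw [h.residual_eq (j + 1) hj, h.residual_eq j hj.le, h.iterate_succ j hj, mulVec_add,
    mulVec_smul, sub_add_eq_sub_sub]

theorem stepSize_mul_energy (h : IsConjugateGradient A b x r p α k) (hj : j < k) :
    α j * (p j ⬝ᵥ A *ᵥ p j) = p j ⬝ᵥ r j := by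
  rw [h.stepSize_eq j hj, Ring.inverse_mul_cancel_right _ _ (h.isUnit_energy j hj),
    dotProduct_comm]

theorem direction_dotProduct_residual_succ (h : IsConjugateGradient A b x r p α k) (hj : j < k) :
    p j ⬝ᵥ r (j + 1) = 0 := by
  rw [h.residual_succ hj, dotProduct_sub, dotProduct_smul, smul_eq_mul, h.stepSize_mul_energy hj,
    sub_self]

theorem direction_succ_conjugate (h : IsConjugateGradient A b x r p α k) (hj : j < k) :
    p (j + 1) ⬝ᵥ A *ᵥ p j = 0 := by
  rw [h.direction_succ j hj, sub_dotProduct, smul_dotProduct, smul_eq_mul,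
    Ring.inverse_mul_cancel_right _ _ (h.isUnit_energy j hj), sub_self]

theorem direction_dotProduct_residual_self (h : IsConjugateGradient A b x r p α k) (hi : i ≤ k) :
    p i ⬝ᵥ r i = r i ⬝ᵥ r i := by
  cases i with
  | zero => rw [h.direction_zero]
  | succ i =>
    nth_rw 1 [h.direction_succ i hi]
    rw [sub_dotProduct, smul_dotProduct, h.direction_dotProduct_residual_succ hi, smul_zero,
      sub_zero]

theorem smul_direction_eq_zero (h : IsConjugateGradient A b x r p α k) (hi : i ≤ k) {t : R}
    (ht : t • r i = 0) : t • p i = 0 := by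
  cases i with
  | zero => rw [h.direction_zero, ht]
  | succ i =>
    rw [h.direction_succ i hi, smul_sub, smul_smul, ← mul_assoc, ← smul_eq_mul t,
      ← smul_dotProduct, ht, zero_dotProduct, zero_mul, zero_smul, sub_zero]

theorem residual_dotProduct_eq_zero (h : IsConjugateGradient A b x r p α k) (hi : i ≤ k)
    {w : ι → R} (hw : ∀ m ≤ i, p m ⬝ᵥ w = 0) : r i ⬝ᵥ w = 0 := by
  cases i with
  | zero => rw [← h.direction_zero, hw 0 le_rfl]
  | succ i =>
    have hp := hw (i + 1) le_rfl
    rwa [h.direction_succ i hi, sub_dotProduct, smul_dotProduct, hw i i.le_succ, smul_zero,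
      sub_zero] at hp

theorem direction_dotProduct_residual_succ_of_conjugate (h : IsConjugateGradient A b x r p α k)
    (hA : A.IsSymm) (hj : j < k) (hres : ∀ i < j, p i ⬝ᵥ r j = 0)
    (hconj : ∀ i < j, p j ⬝ᵥ A *ᵥ p i = 0) (hi : i < j + 1) : p i ⬝ᵥ r (j + 1) = 0 := by
  obtain hij | rfl := Nat.lt_succ_iff_lt_or_eq.mp hi
  · have hconj' : p i ⬝ᵥ A *ᵥ p j = 0 := by
      rw [← hA.eq, dotProduct_transpose_mulVec, hconj i hij]
    rw [h.residual_succ hj, dotProduct_sub, dotProduct_smul, hres i hij, hconj', smul_zero,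
      sub_zero]
  · exact h.direction_dotProduct_residual_succ hj

section FormallyReal

variable [IsFormallyReal R]

theorem eq_zero_of_mul_stepSize_eq_zero (h : IsConjugateGradient A b x r p α k) (hi : i < k)
    {t : R} (ht : t * α i = 0) : t = 0 := by
  have hrr : t * (r i ⬝ᵥ r i) = 0 := by
    rw [← h.direction_dotProduct_residual_self hi.le, ← h.stepSize_mul_energy hi, ← mul_assoc, ht,
      zero_mul]
  have hr : t • r i = 0 := dotProduct_self_eq_zero_of_isFormallyReal <| by
    rw [smul_dotProduct, dotProduct_smul, smul_eq_mul, smul_eq_mul, hrr, mul_zero]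
  have henergy : t * (p i ⬝ᵥ A *ᵥ p i) = 0 := by
    rw [← smul_eq_mul, ← smul_dotProduct, h.smul_direction_eq_zero hi.le hr, zero_dotProduct]
  exact (h.isUnit_energy i hi).mul_left_eq_zero.mp henergy

theorem dotProduct_mulVec_direction_eq_zero (h : IsConjugateGradient A b x r p α k) (hi : i < k)
    {w : ι → R} (hw : r i ⬝ᵥ w = 0) (hw' : r (i + 1) ⬝ᵥ w = 0) : w ⬝ᵥ A *ᵥ p i = 0 := by
  refine h.eq_zero_of_mul_stepSize_eq_zero hi ?_
  rwa [h.residual_succ hi, sub_dotProduct, hw, zero_sub, neg_eq_zero, smul_dotProduct,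
    smul_eq_mul, mul_comm, dotProduct_comm] at hw'

theorem direction_succ_conjugate_of_lt_succ (h : IsConjugateGradient A b x r p α k) (hj : j < k)
    (hres : ∀ i < j + 1, p i ⬝ᵥ r (j + 1) = 0) (hconj : ∀ i < j, p j ⬝ᵥ A *ᵥ p i = 0)
    (hi : i < j + 1) : p (j + 1) ⬝ᵥ A *ᵥ p i = 0 := by
  obtain hij | rfl := Nat.lt_succ_iff_lt_or_eq.mp hi
  · have hrr : ∀ m ≤ j, r m ⬝ᵥ r (j + 1) = 0 := fun m hm =>
      h.residual_dotProduct_eq_zero (hm.trans hj.le) fun l hl =>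
        hres l (Nat.lt_succ_of_le (hl.trans hm))
    have hrAp : r (j + 1) ⬝ᵥ A *ᵥ p i = 0 :=
      h.dotProduct_mulVec_direction_eq_zero (hij.trans hj) (hrr i hij.le) (hrr (i + 1) hij)
    rw [h.direction_succ j hj, sub_dotProduct, smul_dotProduct, hrAp, hconj i hij, smul_zero,
      sub_zero]
  · exact h.direction_succ_conjugate hj

theorem orthogonal_and_conjugate (h : IsConjugateGradient A b x r p α k) (hA : A.IsSymm)
    (hj : j ≤ k) : (∀ i < j, p i ⬝ᵥ r j = 0) ∧ ∀ i < j, p j ⬝ᵥ A *ᵥ p i = 0 := by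
  induction j with
  | zero => exact ⟨fun i hi => absurd hi i.not_lt_zero, fun i hi => absurd hi i.not_lt_zero⟩
  | succ j ih =>
    obtain ⟨hres, hconj⟩ := ih (Nat.le_of_succ_le hj)
    have hres' : ∀ i < j + 1, p i ⬝ᵥ r (j + 1) = 0 := fun _ =>
      h.direction_dotProduct_residual_succ_of_conjugate hA hj hres hconj
    exact ⟨hres', fun _ => h.direction_succ_conjugate_of_lt_succ hj hres' hconj⟩

end FormallyReal

end IsConjugateGradient

theorem stmt13_general {R ι : Type*} [CommRing R] [IsFormallyReal R] [Fintype ι]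
    {A : Matrix ι ι R} (hA : A.IsSymm) {b : ι → R} {x r p : ℕ → ι → R} {α : ℕ → R} {k : ℕ}
    (h : IsConjugateGradient A b x r p α k) {i j : ℕ} (hij : i < j) (hj : j ≤ k) :
    p i ⬝ᵥ r j = 0 :=
  (h.orthogonal_and_conjugate hA hj).1 i hij

/-- CGM orthogonality: with the conjugate gradient recursion feasible up to step `k`
(all `pⱼᵀApⱼ` invertible), `pᵢᵀ rⱼ = 0` for `0 ≤ i < j ≤ k`. -/
theorem stmt13 {R : Type*} [RealRieszAlgebra R] {n : ℕ}
    (A : Matrix (Fin n) (Fin n) R) (hsymm : Aᵀ = A)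
    (hpd : ∀ v : Fin n → R, v ≠ 0 → SPos (v ⬝ᵥ A *ᵥ v))
    (b : Fin n → R) (x r p : ℕ → Fin n → R) (α : ℕ → R) (k : ℕ)
    (hp0 : p 0 = b - A *ᵥ x 0)
    (hunit : ∀ j ≤ k, IsUnit (p j ⬝ᵥ A *ᵥ p j))
    (hx : ∀ j < k, x (j + 1) = x j + α j • p j)
    (hr : ∀ j ≤ k, r j = b - A *ᵥ x j)
    (hp : ∀ j < k, p (j + 1) = r (j + 1) -
      ((r (j + 1) ⬝ᵥ A *ᵥ p j) * Ring.inverse (p j ⬝ᵥ A *ᵥ p j)) • p j)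
    (hα : ∀ j ≤ k, α j = (r j ⬝ᵥ p j) * Ring.inverse (p j ⬝ᵥ A *ᵥ p j)) :
    ∀ i j : ℕ, i < j → j ≤ k → p i ⬝ᵥ r j = 0 :=
  fun _ _ => stmt13_general hsymm ⟨hp0.trans (hr 0 k.zero_le).symm, hr,
    fun j hj => hunit j hj.le, hx, hp, fun j hj => hα j hj.le⟩
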